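/- arXiv:1711.08703 — 4 statements merged into one kernel-verified Lean document; each statement's English description precedes it below -/
import Mathlib

section
/- Let (X, μ) be a standard Borel space with a non-atomic Borel probability measure μ. For every m, n ∈ ℕ and every pair of finite sequences of indices 1 ≤ k₁, …, k_p ≤ m and 1 ≤ l₁, …, l_q ≤ n, the set E = {(f₁,…,f_m,g₁,…,g_n) ∈ L⁰(μ,𝕋)^{m+n} : f_{k₁}⋯f_{k_p} ∩ g_{l₁}⋯g_{l_q} ≈ ∅} is comeager in L⁰(μ,𝕋)^{m+n}. -/
open MeasureTheory Set

/-- The Borel σ-algebra on the circle group `𝕋 ⊆ ℂ`. -/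
noncomputable instance : MeasurableSpace Circle := borel Circle
instance : BorelSpace Circle := ⟨rfl⟩

/-- The metric `d(f,g) = ∫ |f − g| dμ` inducing the topology of convergence in measure
on `L⁰(μ, 𝕋)`. -/
noncomputable def L0dist {Y : Type*} [MeasurableSpace Y] (ν : Measure Y)
    (f g : Y →ₘ[ν] Circle) : ℝ :=
  ∫ x, ‖(f x : ℂ) - (g x : ℂ)‖ ∂ν

/-- The topology of convergence in measure on `L⁰(μ, 𝕋)`: the topology induced by the metric
`L0dist`, i.e. generated by the open balls of that metric. -/
noncomputable instance L0top {Y : Type*} [MeasurableSpace Y] (ν : Measure Y) :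
    TopologicalSpace (Y →ₘ[ν] Circle) :=
  TopologicalSpace.generateFrom
    {U | ∃ (f : Y →ₘ[ν] Circle) (ε : ℝ), 0 < ε ∧ U = {g | L0dist ν f g < ε}}

/-- The set of products `f₁(B)⋯f_m(B) = {f₁(x₁)⋯f_m(x_m) : x₁,…,x_m ∈ B}`. -/
def prodSet {X : Type*} {G : Type*} [Monoid G] {m : ℕ} (f : Fin m → X → G) (B : Set X) :
    Set G :=
  {g | ∃ x : Fin m → X, (∀ i, x i ∈ B) ∧ g = (List.ofFn fun i => f i (x i)).prod}

/-- `ρ_{m,n}(f₁,…,f_m,g₁,…,g_n)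
  = inf { μ(A) : A Borel, f₁(X∖A)⋯f_m(X∖A) ∩ g₁(X∖A)⋯g_n(X∖A) = ∅ }`. -/
noncomputable def rho {X : Type*} [MeasurableSpace X] {G : Type*} [Monoid G] {m n : ℕ}
    (μ : Measure X) (f : Fin m → X → G) (g : Fin n → X → G) : ℝ :=
  sInf {c : ℝ | ∃ A : Set X, MeasurableSet A ∧
    Disjoint (prodSet f Aᶜ) (prodSet g Aᶜ) ∧ c = (μ A).toReal}

open Filter Topology

lemma aux_coe_meas : Measurable (fun z : Circle => (z : ℂ)) :=
  have h : Continuous (fun z : Circle => (z : ℂ)) := by fun_prop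
  h.measurable

lemma aux_prod_sub {ι : Type*} (s : Finset ι) (u v : ι → Circle) :
    ‖((∏ i ∈ s, u i : Circle) : ℂ) - ((∏ i ∈ s, v i : Circle) : ℂ)‖
      ≤ ∑ i ∈ s, ‖(u i : ℂ) - (v i : ℂ)‖ := by
  classical
  induction s using Finset.induction_on with
  | empty => simp
  | insert a s ha ih =>
    rw [Finset.prod_insert ha, Finset.prod_insert ha, Finset.sum_insert ha]
    generalize (∏ i ∈ s, u i) = P at *
    generalize (∏ i ∈ s, v i) = Q at *
    have h : ((u a * P : Circle) : ℂ) - ((v a * Q : Circle) : ℂ)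
        = ((u a : ℂ) - v a) * P + v a * ((P : ℂ) - Q) := by
      push_cast; ring
    rw [h]
    refine (norm_add_le _ _).trans ?_
    rw [norm_mul, norm_mul, Circle.norm_coe, Circle.norm_coe]
    linarith

lemma aux_pow_sub (N : ℕ) (u v : Circle) :
    ‖((u ^ N : Circle) : ℂ) - ((v ^ N : Circle) : ℂ)‖ ≤ N * ‖(u : ℂ) - (v : ℂ)‖ := by
  simpa using aux_prod_sub (Finset.range N) (fun _ => u) (fun _ => v)

lemma aux_exp_sub (a b : ℝ) :
    ‖((Circle.exp a : Circle) : ℂ) - ((Circle.exp b : Circle) : ℂ)‖ ≤ |a - b| := by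
  have h : ((Circle.exp a : Circle) : ℂ) - ((Circle.exp b : Circle) : ℂ)
      = (Circle.exp b : ℂ) * (Complex.exp (Complex.I * ((a - b : ℝ) : ℂ)) - 1) := by
    rw [mul_sub, mul_one, Circle.coe_exp, Circle.coe_exp, ← Complex.exp_add]
    congr 2
    push_cast; ring
  rw [h, norm_mul, Circle.norm_coe, one_mul]
  exact Real.norm_exp_I_mul_ofReal_sub_one_le

/-- Rounding to the `N`-th roots of `exp (i s)`. -/
noncomputable def auxR (s : ℝ) (N : ℕ) (z : Circle) : Circle :=
  Circle.exp (s / N + 2 * Real.pi / N * (⌊Complex.arg (z : ℂ) * N / (2 * Real.pi)⌋ : ℤ))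

lemma auxR_meas (s : ℝ) (N : ℕ) : Measurable (auxR s N) := by
  unfold auxR
  have h1 : Measurable (fun z : Circle => Complex.arg (z : ℂ)) :=
    Complex.measurable_arg.comp aux_coe_meas
  have h2 : Measurable (fun z : Circle =>
      (⌊Complex.arg (z : ℂ) * N / (2 * Real.pi)⌋ : ℤ)) :=
    Int.measurable_floor.comp ((h1.mul_const _).div_const _)
  have h3 : Measurable (fun k : ℤ => Circle.exp (s / N + 2 * Real.pi / N * (k : ℝ))) :=
    measurable_from_top
  exact h3.comp h2

lemma auxR_pow (s : ℝ) (N : ℕ) (hN : 0 < N) (z : Circle) : auxR s N z ^ N = Circle.exp s := by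
  unfold auxR
  generalize (⌊Complex.arg (z : ℂ) * N / (2 * Real.pi)⌋ : ℤ) = k
  have hN' : (N : ℝ) ≠ 0 := by positivity
  have h : ∀ t : ℝ, Circle.exp t ^ N = Circle.exp (N * t) := by
    intro t
    ext
    simp only [Circle.coe_pow, Circle.coe_exp, ← Complex.exp_nat_mul]
    congr 1
    push_cast; ring
  rw [h, Circle.exp_eq_exp]
  exact ⟨k, by field_simp⟩

lemma auxR_dist (s : ℝ) (N : ℕ) (hN : 0 < N) (z : Circle) :
    ‖(z : ℂ) - (auxR s N z : ℂ)‖ ≤ (|s| + 2 * Real.pi) / N := by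
  have hN' : (0 : ℝ) < N := by positivity
  have hpi := Real.pi_pos
  have h0 := aux_exp_sub (Complex.arg (z : ℂ))
    (s / N + 2 * Real.pi / N * (⌊Complex.arg (z : ℂ) * N / (2 * Real.pi)⌋ : ℤ))
  rw [Circle.exp_arg z] at h0
  refine h0.trans ?_
  set t := Complex.arg (z : ℂ)
  have h1 := Int.floor_le (t * N / (2 * Real.pi))
  have h2 := Int.lt_floor_add_one (t * N / (2 * Real.pi))
  generalize (⌊t * N / (2 * Real.pi)⌋ : ℤ) = k at *
  have e : t - (s / N + 2 * Real.pi / N * k)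
      = (2 * Real.pi * (t * N / (2 * Real.pi) - k) - s) / N := by
    field_simp
    ring
  rw [e, abs_div, abs_of_pos hN']
  gcongr
  set w := t * N / (2 * Real.pi) - k
  have hw0 : 0 ≤ w := by simp only [w]; linarith
  have hw1 : w ≤ 1 := by simp only [w]; linarith
  refine (abs_sub _ _).trans ?_
  rw [abs_of_nonneg (by positivity)]
  nlinarith

section
variable {X : Type*} [MeasurableSpace X] (μ : Measure X) [IsProbabilityMeasure μ]

lemma aux_meas (f : X →ₘ[μ] Circle) : Measurable (f : X → Circle) :=
  f.stronglyMeasurable.measurable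

lemma aux_int (f g : X →ₘ[μ] Circle) :
    Integrable (fun x => ‖(f x : ℂ) - (g x : ℂ)‖) μ := by
  have hf : Measurable (fun x => (f x : ℂ)) :=
    aux_coe_meas.comp (aux_meas μ f)
  have hg : Measurable (fun x => (g x : ℂ)) :=
    aux_coe_meas.comp (aux_meas μ g)
  refine Integrable.of_bound (hf.sub hg).norm.aestronglyMeasurable 2 ?_
  refine Eventually.of_forall fun x => ?_
  rw [norm_norm]
  refine (norm_sub_le _ _).trans ?_
  rw [Circle.norm_coe, Circle.norm_coe]; norm_num

lemma aux_tri (f g h : X →ₘ[μ] Circle) : L0dist μ f h ≤ L0dist μ f g + L0dist μ g h := by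
  unfold L0dist
  rw [← integral_add (aux_int μ f g) (aux_int μ g h)]
  refine integral_mono (aux_int μ f h) ((aux_int μ f g).add (aux_int μ g h)) fun x => ?_
  exact norm_sub_le_norm_sub_add_norm_sub _ _ _

lemma aux_self (f : X →ₘ[μ] Circle) : L0dist μ f f = 0 := by simp [L0dist]

lemma aux_ball (f : X →ₘ[μ] Circle) (δ : ℝ) (hδ : 0 < δ) :
    {g | L0dist μ f g < δ} ∈ 𝓝 f := by
  refine IsOpen.mem_nhds ?_ (by simpa [aux_self] using hδ)
  exact TopologicalSpace.isOpen_generateFrom_of_mem ⟨f, δ, hδ, rfl⟩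

/-- the rounded function class -/
noncomputable def auxF (s : ℝ) (N : ℕ) (f : X →ₘ[μ] Circle) : X →ₘ[μ] Circle :=
  AEEqFun.compMeasurable (auxR s N) (auxR_meas s N) f

lemma auxF_ae (s : ℝ) (N : ℕ) (f : X →ₘ[μ] Circle) :
    ∀ᵐ x ∂μ, auxF μ s N f x = auxR s N (f x) :=
  AEEqFun.coeFn_compMeasurable _ _ _

lemma auxF_dist (s : ℝ) (N : ℕ) (hN : 0 < N) (f : X →ₘ[μ] Circle) :
    L0dist μ f (auxF μ s N f) ≤ (|s| + 2 * Real.pi) / N := by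
  have : (|s| + 2 * Real.pi) / N = ∫ _, (|s| + 2 * Real.pi) / (N : ℝ) ∂μ := by simp
  rw [this]
  refine integral_mono_ae (aux_int μ _ _) (integrable_const _) ?_
  filter_upwards [auxF_ae μ s N f] with x hx
  rw [hx]
  exact auxR_dist s N hN _

lemma auxF_tendsto (s : ℝ) (f : X →ₘ[μ] Circle) :
    Tendsto (fun N : ℕ => auxF μ s N f) atTop (𝓝 f) := by
  refine TopologicalSpace.tendsto_nhds_generateFrom_iff.2 ?_
  rintro _ ⟨g, ε, hε, rfl⟩ hf
  have hf' : L0dist μ g f < ε := hf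
  have ht := tendsto_const_div_atTop_nhds_zero_nat (|s| + 2 * Real.pi)
  have := ht.eventually (gt_mem_nhds (sub_pos.2 hf'))
  filter_upwards [this, eventually_gt_atTop 0] with N h1 h2
  have h3 := auxF_dist μ s N h2 f
  have h4 := aux_tri μ g f (auxF μ s N f)
  show L0dist μ g (auxF μ s N f) < ε
  linarith

lemma aux_bad (s : ℝ) (N : ℕ) (hN : 0 < N) (f g : X →ₘ[μ] Circle) (η : ℝ) :
    η * μ.real {x | η ≤ ‖((g x ^ N : Circle) : ℂ) - (Circle.exp s : ℂ)‖}
      ≤ N * L0dist μ (auxF μ s N f) g := by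
  have hg : Measurable (fun x => (((g x) ^ N : Circle) : ℂ)) :=
    aux_coe_meas.comp ((continuous_pow N).measurable.comp (aux_meas μ g))
  have hi : Integrable (fun x => ‖((g x ^ N : Circle) : ℂ) - (Circle.exp s : ℂ)‖) μ := by
    refine Integrable.of_bound (hg.sub_const _).norm.aestronglyMeasurable 2 ?_
    refine Eventually.of_forall fun x => ?_
    rw [norm_norm]
    refine (norm_sub_le _ _).trans ?_
    rw [Circle.norm_coe, Circle.norm_coe]; norm_num
  refine (mul_meas_ge_le_integral_of_nonneg
    (Eventually.of_forall fun x => norm_nonneg _) hi η).trans ?_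
  unfold L0dist
  rw [← integral_const_mul]
  refine integral_mono_ae hi ((aux_int μ _ _).const_mul _) ?_
  filter_upwards [auxF_ae μ s N f] with x hx
  have h := aux_pow_sub N (g x) (auxF μ s N f x)
  rw [norm_sub_rev (auxF μ s N f x : ℂ)]
  rw [hx, auxR_pow s N hN] at h
  rw [hx]
  exact h

lemma aux_mem_prodSet {p : ℕ} (N : ℕ) (s η : ℝ) (f : Fin p → X → Circle) (B : Set X)
    (hB : ∀ i, ∀ x ∈ B, ‖((f i x ^ N : Circle) : ℂ) - (Circle.exp s : ℂ)‖ ≤ η)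
    (z : Circle) (hz : z ∈ prodSet f B) :
    ‖((z ^ N : Circle) : ℂ) - ((Circle.exp s ^ p : Circle) : ℂ)‖ ≤ p * η := by
  obtain ⟨x, hx, rfl⟩ := hz
  rw [List.prod_ofFn, ← Finset.prod_pow]
  have := aux_prod_sub (Finset.univ : Finset (Fin p)) (fun i => f i (x i) ^ N)
    (fun _ => Circle.exp s)
  rw [Finset.prod_const, Finset.card_univ, Fintype.card_fin] at this
  refine this.trans ?_
  refine (Finset.sum_le_sum fun i _ => hB i _ (hx i)).trans ?_
  simp

/-- the open-ish sets -/
def auxV (m n p q : ℕ) (k : Fin p → Fin m) (l : Fin q → Fin n) (ε : ℝ) :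
    Set ((Fin m → (X →ₘ[μ] Circle)) × (Fin n → (X →ₘ[μ] Circle))) :=
  {fg | ∃ A : Set X, MeasurableSet A ∧
    Disjoint (prodSet (fun i => ⇑(fg.1 (k i))) Aᶜ) (prodSet (fun j => ⇑(fg.2 (l j))) Aᶜ) ∧
      μ.real A < ε}

lemma auxV_nhds (m n p q : ℕ) (k : Fin p → Fin m) (l : Fin q → Fin n) (ε : ℝ) (hε : 0 < ε)
    (s t : ℝ) (hst : Circle.exp s ^ p ≠ Circle.exp t ^ q) (N : ℕ) (hN : 0 < N)
    (f : Fin m → (X →ₘ[μ] Circle)) (g : Fin n → (X →ₘ[μ] Circle)) :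
    auxV μ m n p q k l ε ∈ 𝓝 ((fun i => auxF μ s N (f i)), (fun j => auxF μ t N (g j))) := by
  set d := ‖((Circle.exp s ^ p : Circle) : ℂ) - ((Circle.exp t ^ q : Circle) : ℂ)‖ with hd
  have hd0 : 0 < d := by
    rw [hd, norm_pos_iff, sub_ne_zero]
    exact fun h => hst (Circle.ext h)
  obtain ⟨η, hη, hηd⟩ : ∃ η : ℝ, 0 < η ∧ (p + q) * η < d := by
    refine ⟨d / (p + q + 1), by positivity, ?_⟩
    rw [← mul_div_assoc, div_lt_iff₀ (by positivity)]
    nlinarith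
  have hN' : (0 : ℝ) < N := by positivity
  obtain ⟨δ, hδ, hδε⟩ : ∃ δ : ℝ, 0 < δ ∧ (m + n) * (N * δ / η) < ε := by
    refine ⟨ε * η / N / (m + n + 1), by positivity, ?_⟩
    have : (m + n : ℝ) * (N * (ε * η / N / (m + n + 1)) / η) = (m + n) * ε / (m + n + 1) := by
      field_simp
    rw [this, div_lt_iff₀ (by positivity)]
    nlinarith
  have h1 : ∀ᶠ fg in 𝓝 ((fun i => auxF μ s N (f i)), (fun j => auxF μ t N (g j))),
      ∀ i, L0dist μ (auxF μ s N (f i)) (fg.1 i) < δ := by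
    rw [eventually_all]
    intro i
    have hc : Continuous (fun fg : (Fin m → (X →ₘ[μ] Circle)) × (Fin n → (X →ₘ[μ] Circle)) =>
      fg.1 i) := (continuous_apply i).comp continuous_fst
    exact (hc.continuousAt (x := ((fun i => auxF μ s N (f i)), (fun j => auxF μ t N (g j))))).preimage_mem_nhds
      (aux_ball μ (auxF μ s N (f i)) δ hδ)
  have h2 : ∀ᶠ fg in 𝓝 ((fun i => auxF μ s N (f i)), (fun j => auxF μ t N (g j))),
      ∀ j, L0dist μ (auxF μ t N (g j)) (fg.2 j) < δ := by
    rw [eventually_all]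
    intro i
    have hc : Continuous (fun fg : (Fin m → (X →ₘ[μ] Circle)) × (Fin n → (X →ₘ[μ] Circle)) =>
      fg.2 i) := (continuous_apply i).comp continuous_snd
    exact (hc.continuousAt (x := ((fun i => auxF μ s N (f i)), (fun j => auxF μ t N (g j))))).preimage_mem_nhds
      (aux_ball μ (auxF μ t N (g i)) δ hδ)
  filter_upwards [h1, h2] with fg hf hg
  let S : ℝ → (X →ₘ[μ] Circle) → Set X := fun s g =>
    {x | η ≤ ‖((g x ^ N : Circle) : ℂ) - (Circle.exp s : ℂ)‖}
  have hS : ∀ s g, MeasurableSet (S s g) := by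
    intro s g
    have hg : Measurable (fun x => (((g x) ^ N : Circle) : ℂ)) :=
      aux_coe_meas.comp ((continuous_pow N).measurable.comp (aux_meas μ g))
    exact measurableSet_le measurable_const (hg.sub_const _).norm
  have hSm : ∀ s f g, L0dist μ (auxF μ s N f) g < δ → μ.real (S s g) ≤ N * δ / η := by
    intro s f g h
    rw [le_div_iff₀ hη, mul_comm]
    refine (aux_bad μ s N hN f g η).trans ?_
    gcongr
  refine ⟨(⋃ i, S s (fg.1 i)) ∪ ⋃ j, S t (fg.2 j),
    (MeasurableSet.iUnion fun i => hS _ _).union (MeasurableSet.iUnion fun i => hS _ _), ?_, ?_⟩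
  · rw [Set.disjoint_left]
    intro z hz1 hz2
    have e1 := aux_mem_prodSet N s η _ _ (fun i x hx => by
      simp only [S, mem_compl_iff, mem_union, mem_iUnion, not_or, not_exists] at hx
      exact (not_le.1 (hx.1 (k i))).le) z hz1
    have e2 := aux_mem_prodSet N t η _ _ (fun i x hx => by
      simp only [S, mem_compl_iff, mem_union, mem_iUnion, not_or, not_exists] at hx
      exact (not_le.1 (hx.2 (l i))).le) z hz2
    have e3 := norm_sub_le_norm_sub_add_norm_sub ((Circle.exp s ^ p : Circle) : ℂ)
      ((z ^ N : Circle) : ℂ) ((Circle.exp t ^ q : Circle) : ℂ)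
    rw [norm_sub_rev ((Circle.exp s ^ p : Circle) : ℂ) ((z ^ N : Circle) : ℂ)] at e3
    rw [← hd] at e3
    linarith
  · refine lt_of_le_of_lt ?_ hδε
    refine (measureReal_union_le _ _).trans ?_
    have a1 : μ.real (⋃ i, S s (fg.1 i)) ≤ m * (N * δ / η) := by
      refine (measureReal_iUnion_fintype_le _).trans ?_
      refine (Finset.sum_le_sum fun i _ => hSm _ _ _ (hf i)).trans ?_
      simp
    have a2 : μ.real (⋃ i, S t (fg.2 i)) ≤ n * (N * δ / η) := by
      refine (measureReal_iUnion_fintype_le _).trans ?_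
      refine (Finset.sum_le_sum fun i _ => hSm _ _ _ (hg i)).trans ?_
      simp
    linarith

end

lemma aux_exp_pow (p : ℕ) (hp : p ≠ 0) : Circle.exp (Real.pi / p) ^ p ≠ 1 := by
  have hp' : (p : ℝ) ≠ 0 := by positivity
  have h : Circle.exp (Real.pi / p) ^ p = Circle.exp Real.pi := by
    ext
    simp only [Circle.coe_pow, Circle.coe_exp, ← Complex.exp_nat_mul]
    congr 1
    push_cast
    field_simp
  rw [h]
  intro h
  have := congrArg (fun z : Circle => (z : ℂ)) h
  simp only [Circle.coe_exp, Complex.exp_pi_mul_I, Circle.coe_one] at this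
  norm_num at this

lemma aux_exists (p q : ℕ) (h : ¬ (p = 0 ∧ q = 0)) :
    ∃ s t : ℝ, Circle.exp s ^ p ≠ Circle.exp t ^ q := by
  by_cases hp : p = 0
  · have hq : q ≠ 0 := fun hq => h ⟨hp, hq⟩
    exact ⟨0, Real.pi / q, by simpa using (aux_exp_pow q hq).symm⟩
  · exact ⟨Real.pi / p, 0, by simpa using aux_exp_pow p hp⟩

/-- For `(X,μ)` a standard Borel space with a non-atomic Borel probability measure, every
`m, n ∈ ℕ` and all indices `1 ≤ k₁,…,k_p ≤ m`, `1 ≤ l₁,…,l_q ≤ n`, the set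
`E = {(f₁,…,f_m,g₁,…,g_n) ∈ L⁰(μ,𝕋)^{m+n} : f_{k₁}⋯f_{k_p} ∩ g_{l₁}⋯g_{l_q} ≈ ∅}`
is comeager in `L⁰(μ,𝕋)^{m+n}`. -/
theorem statement0 {X : Type*} [MeasurableSpace X] [StandardBorelSpace X]
    (μ : Measure X) [IsProbabilityMeasure μ] [NullSingletonClass μ]
    (m n p q : ℕ) (k : Fin p → Fin m) (l : Fin q → Fin n) :
    {fg : (Fin m → (X →ₘ[μ] Circle)) × (Fin n → (X →ₘ[μ] Circle)) |
        rho μ (fun i => ⇑(fg.1 (k i))) (fun j => ⇑(fg.2 (l j))) = 0} ∈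
      residual ((Fin m → (X →ₘ[μ] Circle)) × (Fin n → (X →ₘ[μ] Circle))) := by
  by_cases hpq : p = 0 ∧ q = 0
  · -- both products are empty: no admissible `A` exists
    obtain ⟨rfl, rfl⟩ := hpq
    refine mem_of_superset univ_mem fun fg _ => ?_
    show sInf _ = (0 : ℝ)
    convert Real.sInf_empty
    rw [Set.eq_empty_iff_forall_notMem]
    rintro c ⟨A, -, hA, -⟩
    have h1 : (1 : Circle) ∈ prodSet (fun i => ⇑(fg.1 (k i))) Aᶜ :=
      ⟨fun i => i.elim0, fun i => i.elim0, by simp⟩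
    have h2 : (1 : Circle) ∈ prodSet (fun j => ⇑(fg.2 (l j))) Aᶜ :=
      ⟨fun i => i.elim0, fun i => i.elim0, by simp⟩
    exact Set.disjoint_left.1 hA h1 h2
  obtain ⟨s, t, hst⟩ := aux_exists p q hpq
  have hV : ∀ r : ℕ, interior (auxV μ m n p q k l (1 / ((r : ℝ) + 1))) ∈
      residual ((Fin m → (X →ₘ[μ] Circle)) × (Fin n → (X →ₘ[μ] Circle))) := by
    intro r
    refine residual_of_dense_open isOpen_interior ?_
    rintro ⟨f, g⟩
    have ht : Tendsto (fun N : ℕ =>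
        ((fun i => auxF μ s N (f i)), (fun j => auxF μ t N (g j)))) atTop (𝓝 (f, g)) :=
      Tendsto.prodMk_nhds (tendsto_pi_nhds.2 fun i => auxF_tendsto μ s (f i))
        (tendsto_pi_nhds.2 fun i => auxF_tendsto μ t (g i))
    refine mem_closure_of_tendsto ht ?_
    filter_upwards [eventually_gt_atTop 0] with N hN
    exact mem_interior_iff_mem_nhds.2
      (auxV_nhds μ m n p q k l _ (by positivity) s t hst N hN f g)
  refine mem_of_superset (countable_iInter_mem.2 hV) ?_
  intro fg hfg
  rw [mem_iInter] at hfg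
  have hb : BddBelow {c : ℝ | ∃ A : Set X, MeasurableSet A ∧
      Disjoint (prodSet (fun i => ⇑(fg.1 (k i))) Aᶜ) (prodSet (fun j => ⇑(fg.2 (l j))) Aᶜ) ∧
        c = (μ A).toReal} := by
    refine ⟨0, ?_⟩
    rintro c ⟨A, -, -, rfl⟩
    exact ENNReal.toReal_nonneg
  refine le_antisymm ?_ ?_
  · refine le_of_forall_pos_le_add fun ε hε => ?_
    obtain ⟨r, hr⟩ := exists_nat_one_div_lt hε
    obtain ⟨A, hA, hd, hm⟩ := interior_subset (hfg r)
    have : rho μ (fun i => ⇑(fg.1 (k i))) (fun j => ⇑(fg.2 (l j))) ≤ (μ A).toReal :=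
      csInf_le hb ⟨A, hA, hd, rfl⟩
    have hm' : (μ A).toReal < 1 / ((r : ℝ) + 1) := hm
    linarith
  · refine Real.sInf_nonneg ?_
    rintro c ⟨A, -, -, rfl⟩
    exact ENNReal.toReal_nonneg
end

section
/- Let (X, μ) be a standard Borel space with a non-atomic Borel probability measure μ. For every m, n ∈ ℕ and every pair of finite sequences of indices 1 ≤ k₁, …, k_p ≤ m and 1 ≤ l₁, …, l_q ≤ n, the set of tuples (f₁,…,f_m,g₁,…,g_n) ∈ L⁰(μ,𝕋)^{m+n} such that all of f₁,…,f_m,g₁,…,g_n are finite step functions (i.e., measurable functions with finite range) and f_{k₁}⋯f_{k_p} ∩ g_{l₁}⋯g_{l_q} ≈ ∅, is dense in L⁰(μ,𝕋)^{m+n}. -/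
open MeasureTheory Set

/-- An element of `L⁰(μ,𝕋)` is a finite step function if it has a Borel measurable
representative with finite range. -/
def IsFiniteStep {X : Type*} [MeasurableSpace X] {μ : Measure X} (f : X →ₘ[μ] Circle) : Prop :=
  ∃ s : X → Circle, Measurable s ∧ (Set.range s).Finite ∧ ⇑f =ᵐ[μ] s

lemma circle_cont : Continuous (fun z : Circle => (z : ℂ)) := by fun_prop

lemma exp_dist_le (a b : ℝ) : ‖(Circle.exp a : ℂ) - (Circle.exp b : ℂ)‖ ≤ |a - b| := by
  have h1 : (Circle.exp a : ℂ) - (Circle.exp b : ℂ)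
      = (Circle.exp b : ℂ) * (Complex.exp (Complex.I * ((a - b : ℝ) : ℂ)) - 1) := by
    rw [Circle.coe_exp, Circle.coe_exp, mul_sub, ← Complex.exp_add]
    congr 2
    · push_cast; ring
    · ring
  rw [h1, norm_mul, Circle.norm_coe, one_mul]
  simpa using Real.norm_exp_I_mul_ofReal_sub_one_le (x := a - b)

/-- Rounding of the circle to the `N`-th roots of unity. -/
noncomputable def rnd (N : ℕ) (z : Circle) : Circle :=
  Circle.exp (2 * Real.pi * (⌊(N : ℝ) * Complex.arg z / (2 * Real.pi)⌋ : ℝ) / N)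

lemma rnd_measurable (N : ℕ) : Measurable (rnd N) := by
  unfold rnd
  have h1 : Measurable fun z : Circle => Complex.arg z :=
    Complex.measurable_arg.comp circle_cont.measurable
  have h2 : Measurable fun z : Circle => (⌊(N : ℝ) * Complex.arg z / (2 * Real.pi)⌋ : ℝ) :=
    (measurable_from_top (f := fun n : ℤ => (n : ℝ))).comp
      (Int.measurable_floor.comp ((h1.const_mul _).div_const _))
  exact Circle.exp.continuous.measurable.comp ((h2.const_mul _).div_const _)

lemma rnd_pow (N : ℕ) (hN : 0 < N) (z : Circle) : rnd N z ^ N = 1 := by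
  have hN' : (N : ℝ) ≠ 0 := by positivity
  unfold rnd
  rw [← Circle.exp_nsmul, nsmul_eq_mul, mul_div_cancel₀ _ hN', mul_comm]
  exact Circle.exp_int_mul_two_pi _

lemma rnd_dist (N : ℕ) (hN : 0 < N) (z : Circle) :
    ‖(z : ℂ) - (rnd N z : ℂ)‖ ≤ 2 * Real.pi / N := by
  have hN' : (0 : ℝ) < N := by positivity
  have hpi := Real.pi_pos
  conv_lhs => rw [← Circle.exp_arg z]
  rw [Circle.exp_arg z]
  have := exp_dist_le (Complex.arg z)
    (2 * Real.pi * (⌊(N : ℝ) * Complex.arg z / (2 * Real.pi)⌋ : ℝ) / N)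
  rw [Circle.exp_arg z] at this
  refine this.trans ?_
  set t := (N : ℝ) * Complex.arg z / (2 * Real.pi) with ht
  have e : Complex.arg z - 2 * Real.pi * (⌊t⌋ : ℝ) / N = 2 * Real.pi / N * (t - ⌊t⌋) := by
    rw [ht]; field_simp
  rw [e, abs_mul, abs_of_pos (by positivity)]
  have h1 := Int.floor_le t
  have h2 := Int.lt_floor_add_one t
  have : |t - ⌊t⌋| ≤ 1 := by rw [abs_le]; constructor <;> linarith
  nlinarith [show 0 < 2 * Real.pi / N by positivity]

lemma finite_pow_eq (N : ℕ) (hN : 0 < N) : {z : Circle | z ^ N = 1}.Finite := by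
  have h : ((Polynomial.nthRoots N (1 : ℂ)).toFinset : Set ℂ).Finite := Finset.finite_toSet _
  refine (h.preimage (f := fun z : Circle => (z : ℂ)) Circle.coe_injective.injOn).subset ?_
  intro z hz
  have hz' : z ^ N = 1 := hz
  simp only [mem_preimage, Finset.mem_coe, Multiset.mem_toFinset, Polynomial.mem_nthRoots hN]
  rw [← Circle.coe_pow, hz', Circle.coe_one]

lemma exists_shift (p q : ℕ) (N : ℕ) (hN : 0 < N) : ∃ c d : Circle,
    ‖(1 : ℂ) - c‖ ≤ Real.pi / N ∧ ‖(1 : ℂ) - d‖ ≤ Real.pi / N ∧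
    ((0 < p ∨ 0 < q) → (c ^ N) ^ p ≠ (d ^ N) ^ q) := by
  have hpi := Real.pi_pos
  have hN' : (0 : ℝ) < N := by positivity
  have key : ∀ r : ℕ, 0 < r → ∃ c : Circle, ‖(1 : ℂ) - c‖ ≤ Real.pi / N ∧ (c ^ N) ^ r ≠ 1 := by
    intro r hr
    have hr' : (1 : ℝ) ≤ r := by exact_mod_cast hr
    refine ⟨Circle.exp (Real.pi / (N * r)), ?_, ?_⟩
    · have := exp_dist_le 0 (Real.pi / (N * r))
      simp only [Circle.exp_zero, Circle.coe_one] at this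
      refine this.trans ?_
      rw [zero_sub, abs_neg, abs_of_pos (by positivity)]
      gcongr
      nlinarith
    · rw [← pow_mul, ← Circle.exp_nsmul, nsmul_eq_mul]
      push_cast
      rw [mul_div_cancel₀ _ (by positivity)]
      intro h
      have h2 := congrArg (fun z : Circle => (z : ℂ)) h
      simp only [Circle.coe_exp, Complex.exp_pi_mul_I, Circle.coe_one] at h2
      norm_num at h2
  have h0 : ‖(1 : ℂ) - (1 : Circle)‖ ≤ Real.pi / N := by
    simp only [Circle.coe_one, sub_self, norm_zero]; positivity
  rcases Nat.eq_zero_or_pos q with hq | hq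
  · rcases Nat.eq_zero_or_pos p with hp | hp
    · exact ⟨1, 1, h0, h0, fun h => by omega⟩
    · obtain ⟨c, hc, hc'⟩ := key p hp
      exact ⟨c, 1, hc, h0, fun _ => by simpa using hc'⟩
  · obtain ⟨c, hc, hc'⟩ := key q hq
    exact ⟨1, c, h0, hc, fun _ => by simpa using hc'.symm⟩

section
variable {X : Type*} [MeasurableSpace X] {μ : Measure X}

/-- Shifted rounding of a measurable function. -/
noncomputable def rndFun (N : ℕ) (c : Circle) (f : X →ₘ[μ] Circle) : X →ₘ[μ] Circle :=
  AEEqFun.mk (fun x => c * rnd N (f x))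
    ((((rnd_measurable N).comp f.measurable).const_mul c).aestronglyMeasurable)

lemma rndFun_coe (N : ℕ) (c : Circle) (f : X →ₘ[μ] Circle) :
    ⇑(rndFun N c f) =ᵐ[μ] fun x => c * rnd N (f x) := AEEqFun.coeFn_mk _ _

lemma rndFun_step (N : ℕ) (hN : 0 < N) (c : Circle) (f : X →ₘ[μ] Circle) :
    IsFiniteStep (rndFun N c f) := by
  refine ⟨_, ((rnd_measurable N).comp f.measurable).const_mul c, ?_, rndFun_coe N c f⟩
  refine ((finite_pow_eq N hN).image (fun z => c * z)).subset ?_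
  rintro _ ⟨x, rfl⟩
  exact ⟨_, rnd_pow N hN (f x), rfl⟩

lemma L0_integrable [IsProbabilityMeasure μ] (f g : X →ₘ[μ] Circle) :
    Integrable (fun x => ‖(f x : ℂ) - (g x : ℂ)‖) μ := by
  refine Integrable.of_bound (C := 2) ?_ (Filter.Eventually.of_forall fun x => ?_)
  · exact ((circle_cont.comp_aestronglyMeasurable f.aestronglyMeasurable).sub
      (circle_cont.comp_aestronglyMeasurable g.aestronglyMeasurable)).norm
  · rw [norm_norm]
    refine (norm_sub_le _ _).trans ?_
    rw [Circle.norm_coe, Circle.norm_coe]; norm_num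

lemma rndFun_dist [IsProbabilityMeasure μ] (N : ℕ) (hN : 0 < N) (c : Circle)
    (hc : ‖(1 : ℂ) - c‖ ≤ Real.pi / N) (h f : X →ₘ[μ] Circle) :
    L0dist μ h (rndFun N c f) ≤ L0dist μ h f + 3 * Real.pi / N := by
  unfold L0dist
  have e : ∫ x, (‖(h x : ℂ) - (f x : ℂ)‖ + 3 * Real.pi / N) ∂μ
      = ∫ x, ‖(h x : ℂ) - (f x : ℂ)‖ ∂μ + 3 * Real.pi / N := by
    rw [integral_add (L0_integrable h f) (integrable_const _)]
    simp
  rw [← e]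
  refine integral_mono_ae (L0_integrable _ _) ((L0_integrable h f).add (integrable_const _)) ?_
  filter_upwards [rndFun_coe N c f] with x hx
  rw [hx, Circle.coe_mul]
  have e2 : (h x : ℂ) - c * (rnd N (f x)) = ((h x : ℂ) - f x) + (((f x : ℂ) - rnd N (f x))
      + (1 - c) * rnd N (f x)) := by ring
  rw [e2]
  refine (norm_add_le _ _).trans (add_le_add le_rfl ((norm_add_le _ _).trans ?_))
  rw [norm_mul, Circle.norm_coe, mul_one]
  have := rnd_dist N hN (f x)
  calc _ ≤ 2 * Real.pi / N + Real.pi / N := add_le_add this hc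
    _ = _ := by ring

lemma rndFun_tendsto [IsProbabilityMeasure μ] (c : ℕ → Circle)
    (hc : ∀ N, ‖(1 : ℂ) - c N‖ ≤ Real.pi / (N + 1 : ℕ)) (f : X →ₘ[μ] Circle) :
    Filter.Tendsto (fun N => rndFun (N + 1) (c N) f) Filter.atTop (nhds f) := by
  rw [TopologicalSpace.tendsto_nhds_generateFrom_iff]
  rintro _ ⟨h, ε, hε, rfl⟩ hf
  have hf' : L0dist μ h f < ε := hf
  have ht : Filter.Tendsto (fun N : ℕ => L0dist μ h f + 3 * Real.pi / (N + 1 : ℕ)) Filter.atTop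
      (nhds (L0dist μ h f + 0)) :=
    tendsto_const_nhds.add ((tendsto_const_div_atTop_nhds_zero_nat (3 * Real.pi)).comp
      (Filter.tendsto_add_atTop_nat 1))
  rw [add_zero] at ht
  filter_upwards [ht.eventually_lt_const hf'] with N hN
  exact (rndFun_dist (N + 1) N.succ_pos (c N) (hc N) h f).trans_lt hN

lemma prodSet_pow {p N : ℕ} (hN : 0 < N) (c : Circle) (F f : Fin p → X → Circle) (B : Set X)
    (hB : ∀ x ∈ B, ∀ i, F i x = c * rnd N (f i x)) {z : Circle} (hz : z ∈ prodSet F B) :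
    z ^ N = (c ^ N) ^ p := by
  obtain ⟨x, hx, rfl⟩ := hz
  rw [List.prod_ofFn, ← Finset.prod_pow]
  rw [Finset.prod_congr rfl (g := fun _ => c ^ N)]
  · simp
  · intro i _
    rw [hB _ (hx i), mul_pow, rnd_pow N hN, mul_one]

lemma rho_zero {p q N : ℕ} (hN : 0 < N) (c d : Circle)
    (hcd : (0 < p ∨ 0 < q) → (c ^ N) ^ p ≠ (d ^ N) ^ q)
    (f : Fin p → (X →ₘ[μ] Circle)) (g : Fin q → (X →ₘ[μ] Circle)) :
    rho μ (fun i => ⇑(rndFun N c (f i))) (fun j => ⇑(rndFun N d (g j))) = 0 := by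
  by_cases hpq : 0 < p ∨ 0 < q
  · have h1 : ∀ᵐ x ∂μ, (∀ i, rndFun N c (f i) x = c * rnd N (f i x)) ∧
        (∀ j, rndFun N d (g j) x = d * rnd N (g j x)) :=
      (ae_all_iff.2 fun i => rndFun_coe N c (f i)).and (ae_all_iff.2 fun j => rndFun_coe N d (g j))
    obtain ⟨A, hA, hAm, hA0⟩ := exists_measurable_superset_of_null (ae_iff.1 h1)
    have hB : ∀ x ∈ Aᶜ, (∀ i, rndFun N c (f i) x = c * rnd N (f i x)) ∧
        (∀ j, rndFun N d (g j) x = d * rnd N (g j x)) := by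
      intro x hx
      by_contra h
      exact hx (hA h)
    refine IsLeast.csInf_eq ⟨⟨A, hAm, ?_, by simp [hA0]⟩, ?_⟩
    · rw [Set.disjoint_left]
      intro z hz hz'
      exact hcd hpq ((prodSet_pow hN c _ (fun i => ⇑(f i)) Aᶜ (fun x hx => (hB x hx).1) hz).symm.trans
        (prodSet_pow hN d _ (fun i => ⇑(g i)) Aᶜ (fun x hx => (hB x hx).2) hz'))
    · rintro _ ⟨_, _, _, rfl⟩
      exact ENNReal.toReal_nonneg
  · have hp : p = 0 := by omega
    have hq : q = 0 := by omega
    subst hp hq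
    unfold rho
    convert Real.sInf_empty
    rw [Set.eq_empty_iff_forall_notMem]
    rintro _ ⟨A, _, hd, _⟩
    exact Set.disjoint_left.1 hd (show (1 : Circle) ∈ _ from ⟨Fin.elim0, fun i => i.elim0, by simp⟩)
      ⟨Fin.elim0, fun i => i.elim0, by simp⟩

end

/-- For `(X,μ)` a standard Borel space with a non-atomic Borel probability measure, every
`m, n ∈ ℕ` and all indices `1 ≤ k₁,…,k_p ≤ m`, `1 ≤ l₁,…,l_q ≤ n`, the set of tuples
`(f₁,…,f_m,g₁,…,g_n) ∈ L⁰(μ,𝕋)^{m+n}` with all entries finite step functions and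
`f_{k₁}⋯f_{k_p} ∩ g_{l₁}⋯g_{l_q} ≈ ∅` is dense in `L⁰(μ,𝕋)^{m+n}`. -/
theorem statement2 {X : Type*} [MeasurableSpace X] [StandardBorelSpace X]
    (μ : Measure X) [IsProbabilityMeasure μ] [NullSingletonClass μ]
    (m n p q : ℕ) (k : Fin p → Fin m) (l : Fin q → Fin n) :
    Dense {fg : (Fin m → (X →ₘ[μ] Circle)) × (Fin n → (X →ₘ[μ] Circle)) |
        (∀ i, IsFiniteStep (fg.1 i)) ∧ (∀ j, IsFiniteStep (fg.2 j)) ∧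
        rho μ (fun i => ⇑(fg.1 (k i))) (fun j => ⇑(fg.2 (l j))) = 0} := by
  rintro ⟨f, g⟩
  choose c d hc hd hcd using fun N : ℕ => exists_shift p q (N + 1) N.succ_pos
  have ht : Filter.Tendsto (fun N : ℕ => ((fun i => rndFun (N + 1) (c N) (f i)),
      (fun j => rndFun (N + 1) (d N) (g j)))) Filter.atTop (nhds (f, g)) :=
    (tendsto_pi_nhds.2 fun i => rndFun_tendsto c hc (f i)).prodMk_nhds
      (tendsto_pi_nhds.2 fun j => rndFun_tendsto d hd (g j))
  refine mem_closure_of_tendsto ht (Filter.Eventually.of_forall fun N => ⟨?_, ?_, ?_⟩)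
  · exact fun i => rndFun_step _ N.succ_pos _ _
  · exact fun j => rndFun_step _ N.succ_pos _ _
  · exact rho_zero N.succ_pos (c N) (d N) (hcd N) (fun i => f (k i)) (fun j => g (l j))
end

section
/- Let (X, μ) be a standard Borel space with a non-atomic Borel probability measure μ. Let κ = (u₁,…,u_t) and κ′ = (v₁,…,v_{t′}) be tuples of nonzero integers and let R = {r ∈ S_t : (v₁,…,v_{t′}) = r(u₁,…,u_t)} (in particular R = ∅ if t ≠ t′). Then for comeagerly many f ∈ L⁰(μ,𝕋), the functions f^κ and f^{κ′} are almost R-disjoint. -/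
open MeasureTheory Set

/-- `f^κ(x₁,…,x_t) = ∏ᵢ f(xᵢ)^{κᵢ}`. -/
noncomputable def fpow {X : Type*} {t : ℕ} (f : X → Circle) (κ : Fin t → ℤ) :
    (Fin t → X) → Circle :=
  fun x => ∏ i, f (x i) ^ κ i

/-- `f^κ` and `f^{κ′}` are almost `R`-disjoint: away from a μ-null Borel set `A`, whenever
`x₁,…,x_t` are pairwise distinct, `y₁,…,y_{t′}` are pairwise distinct, and
`f^κ(x) = f^{κ′}(y)`, we have `t = t′` and `y = r(x)` for some `r ∈ R`. -/
def AlmostRDisjoint {X : Type*} [MeasurableSpace X] (μ : Measure X) {t t' : ℕ}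
    (f : X → Circle) (κ : Fin t → ℤ) (κ' : Fin t' → ℤ)
    (R : Set (Equiv.Perm (Fin t))) : Prop :=
  ∃ A : Set X, MeasurableSet A ∧ μ A = 0 ∧
    ∀ (x : Fin t → X) (y : Fin t' → X),
      (∀ i, x i ∉ A) → (∀ j, y j ∉ A) →
      Function.Injective x → Function.Injective y →
      fpow f κ x = fpow f κ' y →
      ∃ h : t = t', ∃ r ∈ R, ∀ i : Fin t, y (Fin.cast h i) = x (r i)

namespace Aux5

open Filter Topology

theorem circle_dist (a b : Circle) : dist a b = ‖(a : ℂ) - (b : ℂ)‖ := by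
  rw [← dist_eq_norm]; rfl

section L0
variable {X : Type*} [MeasurableSpace X] {μ : Measure X}

theorem meas (f : X →ₘ[μ] Circle) : Measurable f := f.stronglyMeasurable.measurable

theorem L0dist_eq (f g : X →ₘ[μ] Circle) : L0dist μ f g = ∫ x, dist (f x) (g x) ∂μ := by
  simp only [L0dist, circle_dist]

theorem dist_le_two (a b : Circle) : dist a b ≤ 2 := by
  rw [circle_dist]
  refine (norm_sub_le _ _).trans ?_
  simp only [Circle.norm_coe]; norm_num

theorem integrable_dist [IsFiniteMeasure μ] {f g : X → Circle} (hf : Measurable f)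
    (hg : Measurable g) : Integrable (fun x => dist (f x) (g x)) μ := by
  refine Integrable.of_bound (hf.dist hg).aestronglyMeasurable 2 (ae_of_all _ fun x => ?_)
  rw [Real.norm_of_nonneg dist_nonneg]
  exact dist_le_two _ _

theorem L0dist_triangle [IsFiniteMeasure μ] (f g h : X →ₘ[μ] Circle) :
    L0dist μ f h ≤ L0dist μ f g + L0dist μ g h := by
  simp only [L0dist_eq]
  rw [← integral_add (integrable_dist (meas f) (meas g)) (integrable_dist (meas g) (meas h))]
  exact integral_mono (integrable_dist (meas f) (meas h))
    ((integrable_dist (meas f) (meas g)).add (integrable_dist (meas g) (meas h)))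
    fun x => dist_triangle _ _ _

theorem L0dist_self (f : X →ₘ[μ] Circle) : L0dist μ f f = 0 := by
  simp [L0dist_eq]

theorem ball_sub [IsFiniteMeasure μ] {U : Set (X →ₘ[μ] Circle)} (hU : IsOpen U) :
    ∀ f ∈ U, ∃ ε > 0, ∀ g, L0dist μ f g < ε → g ∈ U := by
  have hU' : TopologicalSpace.GenerateOpen
    {U | ∃ (f : X →ₘ[μ] Circle) (ε : ℝ), 0 < ε ∧ U = {g | L0dist μ f g < ε}} U := hU
  clear hU
  induction hU' with
  | basic s hs =>
    obtain ⟨f₀, ε, hε, rfl⟩ := hs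
    intro f hf
    refine ⟨ε - L0dist μ f₀ f, sub_pos.2 hf, fun g hg => ?_⟩
    have := L0dist_triangle f₀ f g
    simp only [mem_ofPred_eq] at hf ⊢
    linarith
  | univ => exact fun f _ => ⟨1, one_pos, fun _ _ => mem_univ _⟩
  | inter s t _ _ hs ht =>
    intro f hf
    obtain ⟨a, ha, ha'⟩ := hs f hf.1
    obtain ⟨b, hb, hb'⟩ := ht f hf.2
    exact ⟨min a b, lt_min ha hb, fun g hg =>
      ⟨ha' g (hg.trans_le (min_le_left _ _)), hb' g (hg.trans_le (min_le_right _ _))⟩⟩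
  | sUnion S _ ih =>
    rintro f ⟨s, hs, hf⟩
    obtain ⟨a, ha, ha'⟩ := ih s hs f hf
    exact ⟨a, ha, fun g hg => ⟨s, hs, ha' g hg⟩⟩

theorem open_of_ball {U : Set (X →ₘ[μ] Circle)}
    (h : ∀ f ∈ U, ∃ ε > 0, ∀ g, L0dist μ f g < ε → g ∈ U) : IsOpen U := by
  rw [isOpen_iff_forall_mem_open]
  intro f hf
  obtain ⟨ε, hε, hg⟩ := h f hf
  refine ⟨{g | L0dist μ f g < ε}, hg, TopologicalSpace.GenerateOpen.basic _ ⟨f, ε, hε, rfl⟩, ?_⟩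
  simpa [L0dist_self] using hε

end L0

variable {σ : Type*} [Fintype σ]

theorem rot (m : ℤ) (hm : m ≠ 0) {δ : ℝ} (hδ : 0 < δ) :
    ∃ u : Circle, dist u 1 < δ ∧ u ^ m ≠ 1 := by
  have hc : Tendsto (fun θ : ℝ => Circle.exp θ) (𝓝[>] 0) (𝓝 1) := by
    have : Tendsto (fun θ : ℝ => Circle.exp θ) (𝓝 0) (𝓝 (Circle.exp 0)) :=
      (Circle.exp.continuous).tendsto 0
    rw [Circle.exp_zero] at this
    exact this.mono_left nhdsWithin_le_nhds
  have h1 : ∀ᶠ θ : ℝ in 𝓝[>] 0, dist (Circle.exp θ) 1 < δ := hc (Metric.ball_mem_nhds _ hδ)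
  have hM : (0 : ℝ) < |(m : ℝ)| := abs_pos.2 (by exact_mod_cast hm)
  have h2 : ∀ᶠ θ : ℝ in 𝓝[>] 0, θ ∈ Ioo (0 : ℝ) (1 / |(m : ℝ)|) :=
    Ioo_mem_nhdsGT (by positivity)
  obtain ⟨θ, hθ, h0, h3⟩ := (h1.and h2).exists
  refine ⟨Circle.exp θ, hθ, fun h => ?_⟩
  rw [← Circle.exp_zsmul, Circle.exp_eq_one] at h
  obtain ⟨n, hn⟩ := h
  rw [lt_div_iff₀ hM] at h3
  have h4 : |(m : ℝ) * θ| < 1 := by rw [abs_mul, abs_of_pos h0, mul_comm]; exact h3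
  have h5 : (m : ℝ) * θ ≠ 0 := mul_ne_zero (by exact_mod_cast hm) h0.ne'
  rw [zsmul_eq_mul] at hn
  rw [hn] at h4 h5
  have hn0 : n ≠ 0 := by rintro rfl; simp at h5
  have : (1 : ℝ) ≤ |(n : ℝ)| := by exact_mod_cast Int.one_le_abs hn0
  rw [abs_mul, abs_of_pos Real.two_pi_pos] at h4
  nlinarith [Real.pi_gt_three]

theorem cont (m : σ → ℤ) {ι : Type*} (i : σ → ι) :
    Continuous fun c : ι → Circle => ∏ k, c (i k) ^ m k := by
  fun_prop

theorem perturb (m : σ → ℤ) (k₀ : σ) (hm : m k₀ ≠ 0) {ι : Type*} [Finite ι]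
    (w : ι → Circle) {δ : ℝ} (hδ : 0 < δ) :
    ∃ c : ι → Circle, (∀ a, dist (c a) (w a) < δ) ∧
      ∀ i : σ → ι, Function.Injective i → ∏ k, c (i k) ^ m k ≠ 1 := by
  classical
  have := Fintype.ofFinite ι
  have hd : Dense (⋂ i : {i : σ → ι // Function.Injective i},
      {c : ι → Circle | ∏ k, c (i.1 k) ^ m k ≠ 1}) := by
    apply dense_iInter_of_isOpen
    · intro i
      exact isOpen_ne_fun (cont m i.1) continuous_const
    · rintro ⟨i, hi⟩
      rw [Metric.dense_iff]
      intro c r hr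
      by_cases hc : ∏ k, c (i k) ^ m k = 1
      · obtain ⟨u, hu, hu'⟩ := rot (m k₀) hm hr
        refine ⟨c * Pi.mulSingle (i k₀) u, ?_, ?_⟩
        · rw [Metric.mem_ball, dist_pi_lt_iff hr]
          intro a
          by_cases ha : a = i k₀
          · subst ha
            simp only [Pi.mul_apply, Pi.mulSingle_eq_same]
            have : dist (c (i k₀) * u) (c (i k₀)) = dist u 1 := by
              rw [circle_dist, circle_dist, Circle.coe_mul, ← mul_sub_one, norm_mul, Circle.norm_coe, one_mul,
                Circle.coe_one]
            rwa [this]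
          · simp [ha, hr]
        · simp only [mem_ofPred_eq, Pi.mul_apply, mul_zpow, Finset.prod_mul_distrib, hc, one_mul]
          rw [Finset.prod_eq_single k₀]
          · simpa using hu'
          · intro b _ hb
            rw [Pi.mulSingle_eq_of_ne (fun h => hb (hi h)), one_zpow]
          · simp
      · exact ⟨c, Metric.mem_ball_self hr, hc⟩
  obtain ⟨c, hc, hc'⟩ := Metric.dense_iff.1 hd w δ hδ
  rw [Metric.mem_ball, dist_pi_lt_iff hδ] at hc
  refine ⟨c, hc, fun i hi => ?_⟩
  exact mem_iInter.1 hc' ⟨i, hi⟩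

section G
variable {X : Type*} [MeasurableSpace X] (μ : Measure X)

def G {B : Type*} (π : X → B) (η : ℝ) (m : σ → ℤ) : Set (X →ₘ[μ] Circle) :=
  {f | ∃ C : Set X, MeasurableSet C ∧ μ.real Cᶜ < η ∧ ∃ ε > 0, ∀ z : σ → X, (∀ k, z k ∈ C) →
    Function.Injective (fun k => π (z k)) → ε ≤ dist (∏ k, f (z k) ^ m k) 1}

theorem G_open [IsProbabilityMeasure μ] {B : Type*} (π : X → B) (η : ℝ) (m : σ → ℤ) :
    IsOpen (G μ π η m) := by
  apply open_of_ball
  rintro f ⟨C, hC, hμ, ε, hε, h⟩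
  have huc := CompactSpace.uniformContinuous_of_continuous (cont m (id : σ → σ))
  replace huc := Metric.uniformContinuous_iff.1 huc
  obtain ⟨δ, hδ, hd⟩ := huc (ε / 2) (by positivity)
  refine ⟨δ * (η - μ.real Cᶜ), mul_pos hδ (sub_pos.2 hμ), fun g hg => ?_⟩
  have hmk := mul_meas_ge_le_integral_of_nonneg (μ := μ)
    (ae_of_all _ fun x => dist_nonneg (x := f x) (y := g x))
    (integrable_dist (meas f) (meas g)) δ
  rw [← L0dist_eq] at hmk
  have hlt : μ.real {x | δ ≤ dist (f x) (g x)} < η - μ.real Cᶜ :=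
    lt_of_mul_lt_mul_left (hmk.trans_lt hg) hδ.le
  have hms : MeasurableSet {x | δ ≤ dist (f x) (g x)} :=
    measurableSet_le measurable_const ((meas f).dist (meas g))
  refine ⟨C \ {x | δ ≤ dist (f x) (g x)}, hC.diff hms, ?_, ε / 2, by positivity, ?_⟩
  · rw [diff_eq, compl_inter, compl_compl]
    have := measureReal_union_le (μ := μ) Cᶜ {x | δ ≤ dist (f x) (g x)}
    linarith
  · intro z hz hinj
    have h1 := h z (fun k => (hz k).1) hinj
    have h2 := @hd (fun k => f (z k)) (fun k => g (z k)) (by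
      rw [dist_pi_lt_iff hδ]
      intro k
      exact not_le.1 (hz k).2)
    simp only [id] at h2
    have h3 := dist_triangle (∏ k, f (z k) ^ m k) (∏ k, g (z k) ^ m k) 1
    linarith

theorem approx [IsProbabilityMeasure μ] (f : X →ₘ[μ] Circle) {ε : ℝ} (hε : 0 < ε) :
    ∃ φ : SimpleFunc X Circle, ∫ x, dist (f x) (φ x) ∂μ < ε := by
  have hs := f.stronglyMeasurable
  have : Tendsto (fun n => ∫ x, dist (f x) (hs.approx n x) ∂μ) atTop
      (𝓝 (∫ x, (0 : ℝ) ∂μ)) := by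
    refine tendsto_integral_of_dominated_convergence (fun _ => 2) ?_ (integrable_const _) ?_ ?_
    · intro n
      exact ((meas f).dist (hs.approx n).measurable).aestronglyMeasurable
    · intro n
      refine ae_of_all _ fun x => ?_
      rw [Real.norm_of_nonneg dist_nonneg]
      exact dist_le_two _ _
    · refine ae_of_all _ fun x => ?_
      have := (tendsto_const_nhds (x := f x)).dist (hs.tendsto_approx x)
      simpa using this
  rw [integral_zero] at this
  obtain ⟨n, hn⟩ := (this.eventually (gt_mem_nhds hε)).exists
  exact ⟨_, hn⟩

theorem G_dense [IsProbabilityMeasure μ] {B : Type*} [Finite B] [MeasurableSpace B]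
    [MeasurableSingletonClass B] (π : X → B)
    (hπ : Measurable π) {η : ℝ} (hη : 0 < η) (m : σ → ℤ) (k₀ : σ) (hm : m k₀ ≠ 0) :
    Dense (G μ π η m) := by
  rw [dense_iff_inter_open]
  rintro U hU ⟨f, hf⟩
  obtain ⟨ε, hε, hb⟩ := ball_sub hU f hf
  obtain ⟨φ, hφ⟩ := approx μ f (half_pos hε)
  let F := {x // x ∈ φ.range} × B
  obtain ⟨c, hc, hc'⟩ := perturb m k₀ hm (fun a : F => (a.1 : Circle)) (half_pos hε)
  let q : X → F := fun x => (⟨φ x, φ.mem_range_self x⟩, π x)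
  have hq : Measurable q := (φ.measurable.subtype_mk).prodMk hπ
  have hcq : Measurable (fun x => c (q x)) := (measurable_of_countable c).comp hq
  let g : X →ₘ[μ] Circle := AEEqFun.mk (fun x => c (q x)) hcq.aestronglyMeasurable
  have hg : (g : X → Circle) =ᵐ[μ] fun x => c (q x) := AEEqFun.coeFn_mk _ _
  refine ⟨g, hb g ?_, ?_⟩
  · rw [L0dist_eq]
    have e : ∫ x, dist (f x) (g x) ∂μ ≤ ∫ x, (dist (f x) (φ x) + ε / 2) ∂μ := by
      apply integral_mono_ae (integrable_dist (meas f) (meas g))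
        ((integrable_dist (meas f) φ.measurable).add (integrable_const _))
      filter_upwards [hg] with x hx
      rw [hx]
      refine (dist_triangle _ (φ x) _).trans ?_
      have := hc (q x)
      rw [dist_comm] at this
      exact add_le_add le_rfl this.le
    rw [integral_add (integrable_dist (meas f) φ.measurable) (integrable_const _)] at e
    simp at e
    linarith
  · have hpos : ∃ r > 0, ∀ i : {i : σ → F // Function.Injective i},
        r ≤ dist (∏ k, c (i.1 k) ^ m k) 1 := by
      rcases isEmpty_or_nonempty {i : σ → F // Function.Injective i} with hE | hN
      · exact ⟨1, one_pos, fun i => (hE.false i).elim⟩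
      · obtain ⟨i, hi⟩ := Finite.exists_min
          (fun i : {i : σ → F // Function.Injective i} => dist (∏ k, c (i.1 k) ^ m k) 1)
        exact ⟨_, dist_pos.2 (hc' i.1 i.2), hi⟩
    obtain ⟨r, hr, hr'⟩ := hpos
    refine ⟨{x | g x = c (q x)}, measurableSet_eq_fun (meas g) hcq, ?_, r, hr, ?_⟩
    · have : μ {x | g x = c (q x)}ᶜ = 0 := hg
      rw [Measure.real, this]
      simpa using hη
    · intro z hz hinj
      have : ∏ k, g (z k) ^ m k = ∏ k, c (q (z k)) ^ m k :=
        Finset.prod_congr rfl fun k _ => by rw [show g (z k) = c (q (z k)) from hz k]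
      rw [this]
      exact hr' ⟨fun k => q (z k), fun a b hab => hinj (congrArg Prod.snd hab)⟩

theorem key [StandardBorelSpace X] [IsProbabilityMeasure μ] (m : σ → ℤ) (k₀ : σ)
    (hm : m k₀ ≠ 0) :
    {f : X →ₘ[μ] Circle | ∃ A : Set X, MeasurableSet A ∧ μ A = 0 ∧
      ∀ z : σ → X, (∀ k, z k ∉ A) → Function.Injective z → ∏ k, f (z k) ^ m k ≠ 1} ∈
    residual (X →ₘ[μ] Circle) := by
  let π : (n : ℕ) → X → (Fin n → Bool) := fun n x j => MeasurableSpace.mapNatBool X x j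
  have hπ : ∀ n, Measurable (π n) := fun n => by
    refine measurable_pi_lambda _ fun j => ?_
    exact (measurable_pi_apply _).comp (MeasurableSpace.measurable_mapNatBool X)
  have hres : (⋂ n, G μ (π n) ((1 / 2 : ℝ) ^ n) m) ∈ residual (X →ₘ[μ] Circle) := by
    rw [countable_iInter_mem]
    intro n
    exact residual_of_dense_open (G_open μ _ _ _) (G_dense μ _ (hπ n) (by positivity) m k₀ hm)
  refine mem_of_superset hres fun f hf => ?_
  rw [mem_iInter] at hf
  choose C hC hμ ε hε h using hf
  refine ⟨limsup (fun n => (C n)ᶜ) atTop, ?_, ?_, ?_⟩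
  · exact MeasurableSet.measurableSet_limsup fun n => (hC n).compl
  · apply measure_limsup_atTop_eq_zero
    have hle : ∀ n, μ (C n)ᶜ ≤ ENNReal.ofReal ((1 / 2 : ℝ) ^ n) := fun n => by
      rw [← ofReal_measureReal]
      exact ENNReal.ofReal_le_ofReal (hμ n).le
    refine ne_top_of_le_ne_top ?_ (ENNReal.tsum_le_tsum hle)
    exact (summable_geometric_two).tsum_ofReal_ne_top
  · intro z hz hinj hone
    have h1 : ∀ k, ∀ᶠ n in atTop, z k ∈ C n := fun k => by
      have := hz k
      rw [mem_limsup_iff_frequently_mem, not_frequently] at this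
      filter_upwards [this] with n hn
      simpa using hn
    have h2 : ∀ k l, ∀ᶠ n in atTop, π n (z k) = π n (z l) → k = l := fun k l => by
      by_cases hkl : k = l
      · exact Eventually.of_forall fun _ _ => hkl
      · have : MeasurableSpace.mapNatBool X (z k) ≠ MeasurableSpace.mapNatBool X (z l) :=
          fun e => hkl (hinj (MeasurableSpace.injective_mapNatBool X e))
        obtain ⟨j, hj⟩ := Function.ne_iff.1 this
        filter_upwards [eventually_gt_atTop j] with n hn e
        exact (hj (congrFun e ⟨j, hn⟩)).elim
    have h3 : ∀ᶠ n in atTop, ∀ k l, π n (z k) = π n (z l) → k = l :=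
      eventually_all.2 fun k => eventually_all.2 fun l => h2 k l
    obtain ⟨n, hn1, hn2⟩ := ((eventually_all.2 h1).and h3).exists
    have := h n z hn1 (fun k l => hn2 k l)
    rw [hone, dist_self] at this
    exact absurd (hε n) (not_lt.2 this)

theorem key_all [StandardBorelSpace X] [IsProbabilityMeasure μ] :
    {f : X →ₘ[μ] Circle | ∃ A : Set X, MeasurableSet A ∧ μ A = 0 ∧
      ∀ (S : Finset X) (m : X → ℤ), (∀ z ∈ S, z ∉ A) → ∏ z ∈ S, f z ^ m z = 1 →
        ∀ z ∈ S, m z = 0} ∈ residual (X →ₘ[μ] Circle) := by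
  have hres : (⋂ p : {p : (Σ s : ℕ, (Fin s → ℤ)) // p.2 ≠ 0},
      {f : X →ₘ[μ] Circle | ∃ A : Set X, MeasurableSet A ∧ μ A = 0 ∧
      ∀ z : Fin p.1.1 → X, (∀ k, z k ∉ A) → Function.Injective z →
        ∏ k, f (z k) ^ p.1.2 k ≠ 1}) ∈ residual (X →ₘ[μ] Circle) := by
    rw [countable_iInter_mem]
    rintro ⟨⟨s, m⟩, hm⟩
    obtain ⟨k₀, hk⟩ := Function.ne_iff.1 hm
    exact key μ m k₀ hk
  refine mem_of_superset hres fun f hf => ?_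
  rw [mem_iInter] at hf
  choose A hA hμ h using hf
  refine ⟨⋃ p, A p, MeasurableSet.iUnion hA, measure_iUnion_null hμ, ?_⟩
  intro S m hS hprod z hz
  by_contra hne
  let e := S.equivFin
  refine h ⟨⟨S.card, fun k => m (e.symm k)⟩, fun h0 => hne ?_⟩ (fun k => (e.symm k : X)) ?_ ?_ ?_
  · have := congrFun h0 (e ⟨z, hz⟩)
    simpa using this
  · intro k hk
    exact hS _ (e.symm k).2 (mem_iUnion.2 ⟨_, hk⟩)
  · exact Subtype.val_injective.comp e.symm.injective
  · rw [← hprod, ← Finset.prod_coe_sort S]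
    exact e.symm.prod_comp (fun z : S => f z ^ m z)

end G

theorem comb {X : Type*} (f : X → Circle) (A : Set X)
    (h : ∀ (S : Finset X) (m : X → ℤ), (∀ z ∈ S, z ∉ A) → ∏ z ∈ S, f z ^ m z = 1 →
        ∀ z ∈ S, m z = 0)
    {t t' : ℕ} (κ : Fin t → ℤ) (κ' : Fin t' → ℤ)
    (hκ : ∀ i, κ i ≠ 0) (x : Fin t → X) (y : Fin t' → X)
    (hx : ∀ i, x i ∉ A) (hy : ∀ j, y j ∉ A)
    (hxi : Function.Injective x) (hyi : Function.Injective y)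
    (heq : fpow f κ x = fpow f κ' y) (i : Fin t) : ∃ j, y j = x i ∧ κ' j = κ i := by
  classical
  let S := Finset.univ.image x ∪ Finset.univ.image y
  have hxS : ∀ i, x i ∈ S := fun i => by simp [S]
  have hyS : ∀ i, y i ∈ S := fun i => by simp [S]
  have aux : ∀ (n : ℕ) (k : Fin n → ℤ) (w : Fin n → X), (∀ i, w i ∈ S) →
      ∏ z ∈ S, f z ^ (∑ i, if w i = z then k i else 0) = fpow f k w := by
    intro n k w hw
    have hz : ∀ z, f z ^ (∑ i, if w i = z then k i else 0) =
        ∏ i, f z ^ (if w i = z then k i else 0) := fun z => by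
      generalize (Finset.univ : Finset (Fin n)) = T
      induction T using Finset.induction_on with
      | empty => simp
      | insert a s ha ih => rw [Finset.sum_insert ha, Finset.prod_insert ha, zpow_add, ih]
    simp only [hz]
    rw [Finset.prod_comm]
    refine Finset.prod_congr rfl fun i _ => ?_
    rw [Finset.prod_eq_single (w i)]
    · simp
    · intro b _ hb
      simp [hb.symm]
    · intro hn; exact (hn (hw i)).elim
  have hm := h S (fun z => (∑ i, if x i = z then κ i else 0) - ∑ j, if y j = z then κ' j else 0)
    (by
      intro z hz
      simp only [S, Finset.mem_union, Finset.mem_image, Finset.mem_univ, true_and] at hz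
      rcases hz with ⟨i, rfl⟩ | ⟨j, rfl⟩
      exacts [hx i, hy j])
    (by
      simp only [zpow_sub, Finset.prod_mul_distrib, Finset.prod_inv_distrib]
      rw [aux _ _ _ hxS, aux _ _ _ hyS, heq, mul_inv_cancel]) (x i) (hxS i)
  simp only [hxi.eq_iff, Finset.sum_ite_eq', Finset.mem_univ, if_true] at hm
  by_cases hj : ∃ j, y j = x i
  · obtain ⟨j, hj⟩ := hj
    refine ⟨j, hj, ?_⟩
    rw [← hj] at hm
    simp only [hyi.eq_iff, Finset.sum_ite_eq', Finset.mem_univ, if_true] at hm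
    omega
  · push Not at hj
    simp only [hj, if_false, Finset.sum_const_zero, sub_zero] at hm
    exact (hκ i hm).elim

end Aux5

/-- For `(X,μ)` a standard Borel space with a non-atomic Borel probability measure, tuples
`κ ∈ (ℤ∖{0})^t`, `κ′ ∈ (ℤ∖{0})^{t′}` and
`R = {r ∈ S_t : κ′ = r(κ)}`, for comeagerly many `f ∈ L⁰(μ,𝕋)` the functions `f^κ` and
`f^{κ′}` are almost `R`-disjoint. -/
theorem statement5 {X : Type*} [MeasurableSpace X] [StandardBorelSpace X]
    (μ : Measure X) [IsProbabilityMeasure μ] [NullSingletonClass μ]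
    {t t' : ℕ} (κ : Fin t → ℤ) (κ' : Fin t' → ℤ)
    (hκ : ∀ i, κ i ≠ 0) (hκ' : ∀ j, κ' j ≠ 0) :
    {f : X →ₘ[μ] Circle |
        AlmostRDisjoint μ (⇑f) κ κ'
          {r : Equiv.Perm (Fin t) | ∃ h : t = t', ∀ i, κ' (Fin.cast h i) = κ (r i)}} ∈
      residual (X →ₘ[μ] Circle) := by
  refine Filter.mem_of_superset (Aux5.key_all μ) ?_
  rintro f ⟨A, hA, hμ, h⟩
  refine ⟨A, hA, hμ, fun x y hx hy hxi hyi heq => ?_⟩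
  have h1 := Aux5.comb f A h κ κ' hκ x y hx hy hxi hyi heq
  have h2 := Aux5.comb f A h κ' κ hκ' y x hy hx hyi hxi heq.symm
  choose a ha _ using h1
  choose b hb hb' using h2
  have hai : Function.Injective a := fun i j hij => hxi (by rw [← ha, ← ha, hij])
  have hbi : Function.Injective b := fun i j hij => hyi (by rw [← hb, ← hb, hij])
  have ht : t = t' := le_antisymm (by simpa using Fintype.card_le_of_injective a hai)
    (by simpa using Fintype.card_le_of_injective b hbi)
  subst ht
  refine ⟨rfl, Equiv.ofBijective b (Finite.injective_iff_bijective.1 hbi), ⟨rfl, fun i => ?_⟩,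
    fun i => ?_⟩
  · simpa using (hb' i).symm
  · simpa using (hb i).symm
end

section
/- Let (X, μ) be a standard Borel space with a non-atomic Borel probability measure μ, and let U₁,…,U_n be pairwise disjoint Borel subsets of X, each of positive μ-measure. Then the restriction map Ψ : L⁰(μ,𝕋) → ∏ᵢ₌₁ⁿ L⁰(Uᵢ, μ/μ(Uᵢ), 𝕋) defined by Ψ(f) = (f↾U₁, …, f↾U_n) is continuous, open, and category preserving (the preimage under Ψ of every comeager set is comeager). -/
open MeasureTheory Set

/-- The normalized restriction `μ/μ(U)` of `μ` to `U`, as a (probability) measure on `U`. -/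
noncomputable def nres {X : Type*} [MeasurableSpace X] (μ : Measure X) (U : Set X) :
    Measure U :=
  (μ U)⁻¹ • μ.comap Subtype.val

/-- The inclusion `U → X` is quasi measure preserving from `μ/μ(U)` to `μ`. -/
theorem qmp_val {X : Type*} [MeasurableSpace X] (μ : Measure X) {U : Set X}
    (hU : MeasurableSet U) :
    Measure.QuasiMeasurePreserving (Subtype.val : U → X) (nres μ U) μ := by
  refine ⟨measurable_subtype_coe, ?_⟩
  rw [nres, Measure.map_smul,
    (MeasurableEmbedding.subtype_coe hU).map_comap, Subtype.range_coe]
  exact (Measure.absolutelyContinuous_of_le Measure.restrict_le_self).smul_left _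

/-- The restriction map `f ↦ f↾U` from `L⁰(μ,𝕋)` to `L⁰(U, μ/μ(U), 𝕋)`. -/
noncomputable def restrictL0 {X : Type*} [MeasurableSpace X] (μ : Measure X) {U : Set X}
    (hU : MeasurableSet U) (f : X →ₘ[μ] Circle) : U →ₘ[nres μ U] Circle :=
  f.compQuasiMeasurePreserving Subtype.val (qmp_val μ hU)

lemma L0int {Y : Type*} [MeasurableSpace Y] (ν : Measure Y) [IsFiniteMeasure ν]
    (f g : Y →ₘ[ν] Circle) : Integrable (fun x => ‖(f x : ℂ) - (g x : ℂ)‖) ν := by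
  refine Integrable.of_bound (C := 2) ?_ ?_
  · exact (((continuous_subtype_val.comp_aestronglyMeasurable f.aestronglyMeasurable).sub
      (continuous_subtype_val.comp_aestronglyMeasurable g.aestronglyMeasurable))).norm
  · refine Filter.Eventually.of_forall fun x => ?_
    have := norm_sub_le (f x : ℂ) (g x : ℂ)
    simp only [Circle.norm_coe] at this
    rw [norm_norm]; linarith

lemma L0dist_self {Y : Type*} [MeasurableSpace Y] (ν : Measure Y)
    (f : Y →ₘ[ν] Circle) : L0dist ν f f = 0 := by simp [L0dist]

lemma L0dist_comm {Y : Type*} [MeasurableSpace Y] (ν : Measure Y)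
    (f g : Y →ₘ[ν] Circle) : L0dist ν f g = L0dist ν g f := by simp [L0dist, norm_sub_rev]

lemma L0dist_triangle {Y : Type*} [MeasurableSpace Y] (ν : Measure Y) [IsFiniteMeasure ν]
    (f g h : Y →ₘ[ν] Circle) : L0dist ν f h ≤ L0dist ν f g + L0dist ν g h := by
  unfold L0dist
  rw [← integral_add (L0int ν f g) (L0int ν g h)]
  exact integral_mono (L0int ν f h) ((L0int ν f g).add (L0int ν g h))
    fun x => norm_sub_le_norm_sub_add_norm_sub _ _ _

lemma L0isOpen_iff {Y : Type*} [MeasurableSpace Y] (ν : Measure Y) [IsFiniteMeasure ν]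
    (V : Set (Y →ₘ[ν] Circle)) :
    IsOpen V ↔ ∀ f ∈ V, ∃ ε : ℝ, 0 < ε ∧ ∀ g, L0dist ν f g < ε → g ∈ V := by
  constructor
  · intro h
    induction h with
    | basic s hs =>
      obtain ⟨f, ε, hε, rfl⟩ := hs
      intro g hg
      refine ⟨ε - L0dist ν f g, sub_pos.2 hg, fun k hk => ?_⟩
      have := L0dist_triangle ν f g k
      simp only [Set.mem_ofPred_eq]; linarith
    | univ => exact fun f _ => ⟨1, one_pos, fun g _ => Set.mem_univ g⟩
    | inter s t _ _ hs ht =>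
      rintro f ⟨h1, h2⟩
      obtain ⟨a, ha, ha'⟩ := hs f h1
      obtain ⟨b, hb, hb'⟩ := ht f h2
      exact ⟨min a b, lt_min ha hb, fun g hg =>
        ⟨ha' g (hg.trans_le (min_le_left _ _)), hb' g (hg.trans_le (min_le_right _ _))⟩⟩
    | sUnion S _ hS =>
      rintro f ⟨s, hs, hf⟩
      obtain ⟨a, ha, ha'⟩ := hS s hs f hf
      exact ⟨a, ha, fun g hg => ⟨s, hs, ha' g hg⟩⟩
  · intro h
    rw [isOpen_iff_forall_mem_open]
    intro f hf
    obtain ⟨ε, hε, H⟩ := h f hf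
    refine ⟨{g | L0dist ν f g < ε}, H, TopologicalSpace.isOpen_generateFrom_of_mem
      ⟨f, ε, hε, rfl⟩, ?_⟩
    simpa [L0dist_self] using hε

lemma L0isOpen_ball {Y : Type*} [MeasurableSpace Y] (ν : Measure Y)
    (f : Y →ₘ[ν] Circle) {ε : ℝ} (hε : 0 < ε) : IsOpen {g | L0dist ν f g < ε} :=
  TopologicalSpace.isOpen_generateFrom_of_mem ⟨f, ε, hε, rfl⟩

lemma restrictL0_ae {X : Type*} [MeasurableSpace X] (μ : Measure X) {U : Set X}
    (hU : MeasurableSet U) (f : X →ₘ[μ] Circle) :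
    restrictL0 μ hU f =ᵐ[nres μ U] fun x => f x.1 :=
  AEEqFun.coeFn_compQuasiMeasurePreserving f (qmp_val μ hU)

lemma nres_integral {X : Type*} [MeasurableSpace X] (μ : Measure X) {U : Set X}
    (hU : MeasurableSet U) (φ : X → ℝ) :
    ∫ x : U, φ x ∂(nres μ U) = (μ U).toReal⁻¹ * ∫ x in U, φ x ∂μ := by
  rw [nres, integral_smul_measure, integral_subtype_comap hU φ, ENNReal.toReal_inv, smul_eq_mul]

lemma dist_restrict {X : Type*} [MeasurableSpace X] (μ : Measure X) {U : Set X}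
    (hU : MeasurableSet U) (f g : X →ₘ[μ] Circle) :
    L0dist (nres μ U) (restrictL0 μ hU f) (restrictL0 μ hU g) =
      (μ U).toReal⁻¹ * ∫ x in U, ‖(f x : ℂ) - (g x : ℂ)‖ ∂μ := by
  rw [← nres_integral μ hU, L0dist]
  refine integral_congr_ae ?_
  filter_upwards [restrictL0_ae μ hU f, restrictL0_ae μ hU g] with x h1 h2
  rw [h1, h2]

lemma nres_finite {X : Type*} [MeasurableSpace X] (μ : Measure X) [IsProbabilityMeasure μ]
    {U : Set X} (hU : MeasurableSet U) (h : 0 < μ U) : IsFiniteMeasure (nres μ U) := by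
  constructor
  rw [nres, Measure.smul_apply, (MeasurableEmbedding.subtype_coe hU).comap_apply]
  simp only [Set.image_univ, Subtype.range_coe, smul_eq_mul]
  exact ENNReal.mul_lt_top (ENNReal.inv_lt_top.2 h) (measure_lt_top μ U)

open Classical in
lemma glue {X : Type*} [MeasurableSpace X] (μ : Measure X)
    (N : ℕ) (U : Fin N → Set X) (hU : ∀ i, MeasurableSet (U i))
    (hdisj : Pairwise fun i j => Disjoint (U i) (U j))
    (f : X →ₘ[μ] Circle) (h : ∀ i : Fin N, ((U i) →ₘ[nres μ (U i)] Circle)) :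
    ∃ g : X →ₘ[μ] Circle, (∀ i, restrictL0 μ (hU i) g = h i) ∧
      ∀ᵐ x ∂μ, x ∉ (⋃ i, U i) → g x = f x := by
  let g0 : X → Circle := fun x =>
    if hx : ∃ i, x ∈ U i then h hx.choose ⟨x, hx.choose_spec⟩ else f x
  have h1 : ∀ i (x : U i), g0 x = h i x := by
    intro i x
    have hx : ∃ i, x.1 ∈ U i := ⟨i, x.2⟩
    simp only [g0, dif_pos hx]
    have key : ∀ j (hj : x.1 ∈ U j), h j ⟨x.1, hj⟩ = h i x := by
      intro j hj
      obtain rfl : j = i := by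
        by_contra hne
        exact Set.disjoint_left.1 (hdisj hne) hj x.2
      rfl
    exact key _ _
  have h2 : ∀ x, x ∉ (⋃ i, U i) → g0 x = f x := by
    intro x hx
    have hx : ¬ ∃ i, x ∈ U i := by simpa using hx
    simp only [g0, dif_neg hx]
  have hm : Measurable g0 := by
    intro s hs
    have : g0 ⁻¹' s = (⋃ i, Subtype.val '' ((h i) ⁻¹' s)) ∪ ((⋃ i, U i)ᶜ ∩ f ⁻¹' s) := by
      ext x
      by_cases hx : ∃ i, x ∈ U i
      · obtain ⟨i, hi⟩ := hx
        have e := h1 i ⟨x, hi⟩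
        simp only [Set.mem_preimage, Set.mem_union, Set.mem_iUnion, Set.mem_image,
          Set.mem_inter_iff, Set.mem_compl_iff]
        constructor
        · intro H
          exact Or.inl ⟨i, ⟨x, hi⟩, by rwa [← e], rfl⟩
        · rintro (⟨j, y, hy, rfl⟩ | ⟨H, _⟩)
          · rwa [h1 j y]
          · exact absurd ⟨i, hi⟩ H
      · have hx' : x ∉ ⋃ i, U i := by simpa using hx
        simp only [Set.mem_preimage, Set.mem_union, Set.mem_iUnion, Set.mem_image,
          Set.mem_inter_iff, Set.mem_compl_iff]
        rw [h2 x hx']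
        constructor
        · exact fun H => Or.inr ⟨hx, H⟩
        · rintro (⟨j, y, hy, rfl⟩ | ⟨_, H⟩)
          · exact absurd ⟨j, y.2⟩ hx
          · exact H
    rw [this]
    refine (MeasurableSet.iUnion fun i => ?_).union
      ((MeasurableSet.iUnion hU).compl.inter (f.stronglyMeasurable.measurable hs))
    exact (MeasurableEmbedding.subtype_coe (hU i)).measurableSet_image.2
      ((h i).stronglyMeasurable.measurable hs)
  have hae := AEEqFun.coeFn_mk g0 (μ := μ) hm.aestronglyMeasurable
  refine ⟨AEEqFun.mk g0 hm.aestronglyMeasurable, fun i => ?_, ?_⟩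
  · apply AEEqFun.ext
    filter_upwards [restrictL0_ae μ (hU i) (AEEqFun.mk g0 hm.aestronglyMeasurable),
      (qmp_val μ (hU i)).ae hae] with x e1 e2
    rw [e1, e2, h1]
  · filter_upwards [hae] with x e hx
    rw [e, h2 x hx]

lemma dist_sum {X : Type*} [MeasurableSpace X] (μ : Measure X) [IsProbabilityMeasure μ]
    (N : ℕ) (U : Fin N → Set X) (hU : ∀ i, MeasurableSet (U i))
    (hpos : ∀ i, 0 < μ (U i))
    (hdisj : Pairwise fun i j => Disjoint (U i) (U j))
    (f g : X →ₘ[μ] Circle) (h : ∀ᵐ x ∂μ, x ∉ (⋃ i, U i) → g x = f x) :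
    L0dist μ f g = ∑ i, (μ (U i)).toReal *
      L0dist (nres μ (U i)) (restrictL0 μ (hU i) f) (restrictL0 μ (hU i) g) := by
  have e : ∀ i, (μ (U i)).toReal *
      L0dist (nres μ (U i)) (restrictL0 μ (hU i) f) (restrictL0 μ (hU i) g) =
      ∫ x in U i, ‖(f x : ℂ) - (g x : ℂ)‖ ∂μ := by
    intro i
    rw [dist_restrict, mul_inv_cancel_left₀]
    exact (ENNReal.toReal_pos (hpos i).ne' (measure_ne_top _ _)).ne'
  simp only [e]
  rw [← integral_iUnion_fintype hU hdisj (fun i => (L0int μ f g).integrableOn), L0dist]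
  symm
  apply setIntegral_eq_integral_of_ae_compl_eq_zero
  filter_upwards [h] with x hx hx'
  rw [hx hx']; simp

/-- Let `(X,μ)` be a standard Borel space with a non-atomic Borel probability measure and
`U₁,…,U_N` pairwise disjoint Borel subsets of `X` of positive measure. Then the restriction
map `Ψ : L⁰(μ,𝕋) → ∏ᵢ L⁰(Uᵢ, μ/μ(Uᵢ), 𝕋)`, `Ψ(f) = (f↾U₁,…,f↾U_N)`, is continuous, open
and category preserving. -/
theorem statement10 {X : Type*} [MeasurableSpace X] [StandardBorelSpace X]
    (μ : Measure X) [IsProbabilityMeasure μ] [NullSingletonClass μ]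
    (N : ℕ) (U : Fin N → Set X) (hU : ∀ i, MeasurableSet (U i))
    (hpos : ∀ i, 0 < μ (U i))
    (hdisj : Pairwise fun i j => Disjoint (U i) (U j)) :
    Continuous (fun (f : X →ₘ[μ] Circle) (i : Fin N) => restrictL0 μ (hU i) f) ∧
    IsOpenMap (fun (f : X →ₘ[μ] Circle) (i : Fin N) => restrictL0 μ (hU i) f) ∧
    ∀ S : Set (∀ i : Fin N, ((U i) →ₘ[nres μ (U i)] Circle)),
      S ∈ residual (∀ i : Fin N, ((U i) →ₘ[nres μ (U i)] Circle)) →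
      (fun (f : X →ₘ[μ] Circle) (i : Fin N) => restrictL0 μ (hU i) f) ⁻¹' S ∈
        residual (X →ₘ[μ] Circle) := by
  set Ψ := (fun (f : X →ₘ[μ] Circle) (i : Fin N) => restrictL0 μ (hU i) f) with hΨ
  have hfin : ∀ i, IsFiniteMeasure (nres μ (U i)) := fun i => nres_finite μ (hU i) (hpos i)
  have hc : Continuous Ψ := by
    refine continuous_pi fun i => ⟨fun V hV => ?_⟩
    rw [L0isOpen_iff] at hV ⊢
    intro f hf
    obtain ⟨ε, hε, H⟩ := hV _ hf
    have hp := ENNReal.toReal_pos (hpos i).ne' (measure_ne_top μ (U i))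
    refine ⟨(μ (U i)).toReal * ε, mul_pos hp hε, fun g hg => H _ ?_⟩
    rw [hΨ]
    simp only
    rw [dist_restrict, inv_mul_lt_iff₀ hp]
    refine lt_of_le_of_lt ?_ hg
    exact setIntegral_le_integral (L0int μ f g) (Filter.Eventually.of_forall fun x => norm_nonneg _)
  have ho : IsOpenMap Ψ := by
    intro V hV
    rw [L0isOpen_iff] at hV
    rw [isOpen_iff_forall_mem_open]
    rintro _ ⟨f, hf, rfl⟩
    obtain ⟨ε, hε, H⟩ := hV f hf
    have hδ : 0 < ε / (N + 1) := by positivity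
    refine ⟨Set.univ.pi fun i => {k | L0dist (nres μ (U i)) (Ψ f i) k < ε / (N + 1)}, ?_,
      isOpen_set_pi Set.finite_univ fun i _ => L0isOpen_ball _ _ hδ, ?_⟩
    · intro h hh
      obtain ⟨g, hg, hg'⟩ := glue μ N U hU hdisj f h
      refine ⟨g, H g ?_, funext hg⟩
      rw [dist_sum μ N U hU hpos hdisj f g hg']
      calc _ ≤ ∑ i : Fin N, ε / (N + 1) := by
            refine Finset.sum_le_sum fun i _ => ?_
            have h1 : L0dist (nres μ (U i)) (Ψ f i) (h i) < ε / (N + 1) := hh i (Set.mem_univ i)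
            rw [hg i]
            have h2 : (μ (U i)).toReal ≤ 1 := ENNReal.toReal_le_of_le_ofReal zero_le_one
              (by simpa using prob_le_one)
            have h3 : 0 ≤ L0dist (nres μ (U i)) (Ψ f i) (h i) :=
              integral_nonneg fun x => norm_nonneg _
            exact (mul_le_of_le_one_left h3 h2).trans h1.le
        _ = N * (ε / (N + 1)) := by simp
        _ < ε := by
            rw [← mul_div_assoc, div_lt_iff₀ (by positivity)]
            nlinarith
    · intro i _
      simpa [L0dist_self] using hδ
  exact ⟨hc, ho, fun S hS => tendsto_residual_of_isOpenMap hc ho hS⟩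
end
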